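/- Exhaustive application of the unit and conflict rules is symmetry-lifting: if F* is obtained from a CNF formula F by exhaustively applying the unit rule and the conflict rule, then every semantic symmetry of F*, extended by the identity on Lit(F) ∖ Lit(F*), is a semantic symmetry of F, i.e., Aut_sem(F*)↑^{Lit(F)} ⊆ Aut_sem(F). -/

import Mathlib

/-- A literal over a variable type `V`: a variable or its negation. -/
inductive Lit (V : Type) where
  | pos : V → Lit V
  | neg : V → Lit V
deriving DecidableEq

variable {V : Type} [DecidableEq V]

/-- Negation of a literal (so that double negation is the identity). -/
def Lit.negate : Lit V → Lit V
  | .pos v => .neg v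
  | .neg v => .pos v

/-- The underlying variable of a literal. -/
def Lit.var : Lit V → V
  | .pos v => v
  | .neg v => v

/-- A clause is a finite set of literals. -/
abbrev Clause (V : Type) := Finset (Lit V)

/-- A CNF formula is a finite set of clauses. -/
abbrev CNF (V : Type) := Finset (Clause V)

/-- `Var(F)`: the variables occurring in a formula. -/
def CNF.vars (F : CNF V) : Finset V := Finset.sup F (fun C => Finset.image Lit.var C)

/-- `Lit(F) = Var(F) ∪ {v̄ : v ∈ Var(F)}`. -/
def CNF.lits (F : CNF V) : Finset (Lit V) :=
  Finset.image Lit.pos (CNF.vars F) ∪ Finset.image Lit.neg (CNF.vars F)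

/-- The value of a literal under a complete assignment (given on the variables,
which determines a consistent complete assignment on all literals). -/
def Lit.val (σ : V → Bool) : Lit V → Bool
  | .pos v => σ v
  | .neg v => !(σ v)

/-- `C[σ]`: delete from `C` every literal mapped to `⊥` by `σ`
(i.e. keep `l` with `¬l ∉ σ`). -/
def Clause.reduce (σ : V → Bool) (C : Clause V) : Clause V :=
  Finset.filter (fun l => Lit.val σ (Lit.negate l) = false) C

/-- `F[σ]`: delete every clause containing a literal mapped to `⊤` by `σ`
(for a complete assignment: every clause containing no false literal is kept)
and delete from each remaining clause every literal mapped to `⊥`. -/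
def CNF.reduce (F : CNF V) (σ : V → Bool) : CNF V :=
  Finset.image (Clause.reduce σ) (Finset.filter (fun C => ∀ l ∈ C, Lit.val σ l = false) F)

/-- Apply a map on literals elementwise to clauses and formulas. -/
def CNF.map (φ : Lit V → Lit V) (F : CNF V) : CNF V :=
  Finset.image (fun C => Finset.image φ C) F

/-- `φ` is a syntactic symmetry of `F`: a bijection of `Lit(F)` respecting
negation with `φ(F) = F`. -/
def IsSynSym (F : CNF V) (φ : Lit V → Lit V) : Prop :=
  Set.BijOn φ (CNF.lits F : Set (Lit V)) (CNF.lits F : Set (Lit V)) ∧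
  (∀ l ∈ CNF.lits F, φ (Lit.negate l) = Lit.negate (φ l)) ∧
  CNF.map φ F = F

/-- `φ` is a semantic symmetry of `F`: a bijection of `Lit(F)` respecting
negation with `F[σ] = φ(F)[σ]` for every complete assignment `σ`. -/
def IsSemSym (F : CNF V) (φ : Lit V → Lit V) : Prop :=
  Set.BijOn φ (CNF.lits F : Set (Lit V)) (CNF.lits F : Set (Lit V)) ∧
  (∀ l ∈ CNF.lits F, φ (Lit.negate l) = Lit.negate (φ l)) ∧
  ∀ σ : V → Bool, CNF.reduce F σ = CNF.reduce (CNF.map φ F) σ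

/-- Extend a map defined on the literal set `S` by the identity outside `S`. -/
def extendId (S : Finset (Lit V)) (φ : Lit V → Lit V) : Lit V → Lit V :=
  fun l => if l ∈ S then φ l else l

/-- `F[l ↦ ⊤]`: delete every clause containing `l` and delete `l̄` from every
remaining clause. -/
def CNF.assignTrue (F : CNF V) (l : Lit V) : CNF V :=
  Finset.image (fun C => Finset.erase C (Lit.negate l)) (Finset.filter (fun C => l ∉ C) F)

/-- One (proper) application of the unit rule (`{l} ∈ F` is replaced by
`F[l ↦ ⊤]`) or the conflict rule (`∅ ∈ F` reduces `F` to `{∅}`). -/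
def UCStep (F F' : CNF V) : Prop :=
  F' ≠ F ∧
    ((∃ l : Lit V, ({l} : Clause V) ∈ F ∧ F' = CNF.assignTrue F l) ∨
      ((∅ : Clause V) ∈ F ∧ F' = {(∅ : Clause V)}))

def SatW (w : Lit V → Bool) (F : CNF V) : Prop := ∀ C ∈ F, ∃ l ∈ C, w l = true

theorem val_negate (σ : V → Bool) (l : Lit V) : Lit.val σ (Lit.negate l) = !(Lit.val σ l) := by
  cases l <;> simp [Lit.val, Lit.negate]

theorem reduce_sat (F : CNF V) (σ : V → Bool) (h : SatW (Lit.val σ) F) :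
    CNF.reduce F σ = ∅ := by
  unfold CNF.reduce
  rw [Finset.image_eq_empty, Finset.filter_eq_empty_iff]
  intro C hC hall
  obtain ⟨l, hl, hv⟩ := h C hC
  simp [hall l hl] at hv

theorem reduce_unsat (F : CNF V) (σ : V → Bool) (h : ¬ SatW (Lit.val σ) F) :
    CNF.reduce F σ = {∅} := by
  have key : ∀ C : Clause V, (∀ l ∈ C, Lit.val σ l = false) → Clause.reduce σ C = ∅ := by
    intro C hC
    unfold Clause.reduce
    rw [Finset.filter_eq_empty_iff]
    intro l hl
    simp [val_negate, hC l hl]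
  unfold SatW at h
  push Not at h
  obtain ⟨C, hC, hf⟩ := h
  ext D
  simp only [CNF.reduce, Finset.mem_image, Finset.mem_filter, Finset.mem_singleton]
  constructor
  · rintro ⟨E, ⟨_, hE⟩, rfl⟩
    exact key E hE
  · rintro rfl
    have hf' : ∀ l ∈ C, Lit.val σ l = false := fun l hl => by simpa using hf l hl
    exact ⟨C, ⟨hC, hf'⟩, key C hf'⟩

theorem reduce_eq_iff (F G : CNF V) (σ : V → Bool) :
    CNF.reduce F σ = CNF.reduce G σ ↔ (SatW (Lit.val σ) F ↔ SatW (Lit.val σ) G) := by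
  by_cases h1 : SatW (Lit.val σ) F <;> by_cases h2 : SatW (Lit.val σ) G
  · simp [reduce_sat _ _ h1, reduce_sat _ _ h2, h1, h2]
  · simp [reduce_sat _ _ h1, reduce_unsat _ _ h2, h1, h2, eq_comm]
  · simp [reduce_unsat _ _ h1, reduce_sat _ _ h2, h1, h2]
  · simp [reduce_unsat _ _ h1, reduce_unsat _ _ h2, h1, h2]

theorem satW_map (w : Lit V → Bool) (ψ : Lit V → Lit V) (F : CNF V) :
    SatW w (CNF.map ψ F) ↔ SatW (fun l => w (ψ l)) F := by
  simp [SatW, CNF.map]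

theorem satW_assign (w : Lit V → Bool) (F : CNF V) (l : Lit V) (hl : {l} ∈ F)
    (hw : w (Lit.negate l) = !(w l)) :
    SatW w F ↔ (w l = true ∧ SatW w (CNF.assignTrue F l)) := by
  constructor
  · intro h
    have h1 : w l = true := by simpa using h _ hl
    refine ⟨h1, ?_⟩
    intro D hD
    simp only [CNF.assignTrue, Finset.mem_image, Finset.mem_filter] at hD
    obtain ⟨C, ⟨hC, _⟩, rfl⟩ := hD
    obtain ⟨m, hm, hv⟩ := h C hC
    refine ⟨m, Finset.mem_erase.2 ⟨?_, hm⟩, hv⟩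
    rintro rfl
    simp [hw, h1] at hv
  · rintro ⟨h1, h⟩ C hC
    by_cases hlC : l ∈ C
    · exact ⟨l, hlC, h1⟩
    · obtain ⟨m, hm, hv⟩ := h (C.erase (Lit.negate l))
        (Finset.mem_image.2 ⟨C, Finset.mem_filter.2 ⟨hC, hlC⟩, rfl⟩)
      exact ⟨m, Finset.mem_of_mem_erase hm, hv⟩

theorem mem_lits (F : CNF V) (l : Lit V) :
    l ∈ CNF.lits F ↔ ∃ C ∈ F, ∃ m ∈ C, m.var = l.var := by
  cases l <;> simp [CNF.lits, CNF.vars, Finset.mem_sup, Lit.var]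

theorem var_negate (l : Lit V) : (Lit.negate l).var = l.var := by
  cases l <;> rfl

theorem eq_or_negate (l m : Lit V) (h : m.var = l.var) : m = l ∨ m = Lit.negate l := by
  cases l <;> cases m <;> simp_all [Lit.var, Lit.negate]

theorem lits_assign_sub (F : CNF V) (l : Lit V) : CNF.lits (CNF.assignTrue F l) ⊆ CNF.lits F := by
  intro x hx
  rw [mem_lits] at hx ⊢
  obtain ⟨D, hD, m, hm, hv⟩ := hx
  simp only [CNF.assignTrue, Finset.mem_image, Finset.mem_filter] at hD
  obtain ⟨C, ⟨hC, _⟩, rfl⟩ := hD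
  exact ⟨C, hC, m, Finset.mem_of_mem_erase hm, hv⟩

theorem not_mem_lits_assign (F : CNF V) (l x : Lit V) (hx : x.var = l.var) :
    x ∉ CNF.lits (CNF.assignTrue F l) := by
  intro h
  rw [mem_lits] at h
  obtain ⟨D, hD, m, hm, hv⟩ := h
  simp only [CNF.assignTrue, Finset.mem_image, Finset.mem_filter] at hD
  obtain ⟨C, ⟨hC, hlC⟩, rfl⟩ := hD
  rw [Finset.mem_erase] at hm
  rcases eq_or_negate l m (hv.trans hx) with rfl | rfl
  · exact hlC hm.2
  · exact hm.1 rfl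

theorem ucstep_sub (F F' : CNF V) (h : UCStep F F') : CNF.lits F' ⊆ CNF.lits F := by
  obtain ⟨_, ⟨l, _, rfl⟩ | ⟨_, rfl⟩⟩ := h
  · exact lits_assign_sub F l
  · intro x hx
    simp [mem_lits] at hx

theorem ucstep_lift (F F' : CNF V) (h : UCStep F F') (ψ : Lit V → Lit V)
    (hψ : IsSemSym F' ψ) (hid : ∀ l ∉ CNF.lits F', ψ l = l) : IsSemSym F ψ := by
  have hsub := ucstep_sub F F' h
  obtain ⟨hb, hn, hs⟩ := hψ
  refine ⟨⟨?_, ?_, ?_⟩, ?_, ?_⟩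
  · intro x hx
    by_cases hx' : x ∈ CNF.lits F'
    · exact hsub (hb.mapsTo hx')
    · rw [hid x hx']; exact hx
  · intro x _ y _ hxy
    by_cases hx' : x ∈ CNF.lits F' <;> by_cases hy' : y ∈ CNF.lits F'
    · exact hb.injOn hx' hy' hxy
    · rw [hid y hy'] at hxy
      exact absurd (hxy ▸ hb.mapsTo hx') hy'
    · rw [hid x hx'] at hxy
      exact absurd (hxy ▸ hb.mapsTo hy') hx'
    · rwa [hid x hx', hid y hy'] at hxy
  · intro x hx
    by_cases hx' : x ∈ CNF.lits F'
    · obtain ⟨y, hy, rfl⟩ := hb.surjOn hx'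
      exact ⟨y, hsub hy, rfl⟩
    · exact ⟨x, hx, hid x hx'⟩
  · intro x _
    by_cases hx' : x ∈ CNF.lits F'
    · exact hn x hx'
    · rw [hid x hx', hid]
      rw [mem_lits, var_negate, ← mem_lits]
      exact hx'
  · intro σ
    have hσ := hs σ
    rw [reduce_eq_iff, satW_map] at hσ ⊢
    obtain ⟨_, ⟨l, hl, rfl⟩ | ⟨he, rfl⟩⟩ := h
    · have e1 := hid l (not_mem_lits_assign F l l rfl)
      have e2 := hid _ (not_mem_lits_assign F l _ (var_negate l))
      rw [satW_assign _ F l hl (val_negate σ l),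
        satW_assign (fun l => Lit.val σ (ψ l)) F l hl (by simp only [e1, e2, val_negate]), hσ]
      simp only [e1]
    · constructor <;> intro h <;> simpa using h _ he

/-- Exhaustive application of the unit and conflict rules is
symmetry-lifting: if `F*` is obtained from `F` by exhaustively applying unit
and conflict, then every semantic symmetry of `F*`, extended by the identity
on `Lit(F) ∖ Lit(F*)`, is a semantic symmetry of `F`
(so `Aut_sem(F*)↑^{Lit(F)} ⊆ Aut_sem(F)`). -/
theorem exhaustive_unit_conflict_symmetry_lifting (F Fs : CNF V)
    (hsteps : Relation.ReflTransGen UCStep F Fs)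
    (hdone : ∀ F' : CNF V, ¬ UCStep Fs F')
    (φ : Lit V → Lit V) (hφ : IsSemSym Fs φ) :
    IsSemSym F (extendId (CNF.lits Fs) φ) := by
  have key : ∀ G, Relation.ReflTransGen UCStep G Fs →
      IsSemSym G (extendId (CNF.lits Fs) φ) ∧ CNF.lits Fs ⊆ CNF.lits G := by
    intro G hG
    induction hG using Relation.ReflTransGen.head_induction_on with
    | refl =>
      refine ⟨?_, subset_rfl⟩
      obtain ⟨hb, hn, hs⟩ := hφ
      have heq : ∀ x ∈ CNF.lits Fs, extendId (CNF.lits Fs) φ x = φ x := by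
        intro x hx
        simp [extendId, hx]
      refine ⟨hb.congr (fun x hx => (heq x hx).symm), ?_, ?_⟩
      · intro x hx
        rw [heq x hx, heq, hn x hx]
        rw [mem_lits, var_negate, ← mem_lits]
        exact hx
      · intro σ
        rw [hs σ]
        congr 1
        unfold CNF.map
        refine Finset.image_congr (fun C hC => Finset.image_congr (fun x hx => ?_))
        exact (heq x ((mem_lits _ _).2 ⟨C, hC, x, hx, rfl⟩)).symm
    | head h _ ih =>
      refine ⟨ucstep_lift _ _ h _ ih.1 ?_, ih.2.trans (ucstep_sub _ _ h)⟩
      intro x hx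
      have hx' : x ∉ CNF.lits Fs := fun h' => hx (ih.2 h')
      simp [extendId, hx']
  exact (key F hsteps).1
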